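/- Let f* ∈ argmin_{f∈ℱ} e_orig(f) be a model attaining the lowest possible expected loss, and let f₊ ∈ argmax_{f∈R(0)} MR(f) and f₋ ∈ argmin_{f∈R(0)} MR(f). If f₊ and f₋ satisfy Assumptions 1, 2 and 3, then for any δ ∈ (0,1), P( MR(f*) ∈ [ MCR̂₋(ε₂) − Q₂, MCR̂₊(ε₂) + Q₂ ] ) ≥ 1 − δ, where ε₂ = 2B_ref·√(log(6/δ)/(2n)) and Q₂ = B_switch/b_orig − (B_switch − B_ind·√(log(12/δ)/n)) / (b_orig + B_ind·√(log(12/δ)/(2n))). -/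

import Mathlib

open MeasureTheory

/-!
With high probability the extremal models `f₊` and `f₋` of the population Rashomon set also belong
to the empirical one: this is Hoeffding's inequality for the difference between their loss and that
of `f_ref`, which is at most `B_ref` in absolute value. On that event the empirical reliance of `f₊`
is at most the empirical maximum, and that of `f₋` at least the empirical minimum.

It remains to compare the population and empirical reliance of a single model. Hoeffding's
inequality controls the denominator, a sample mean, and the numerator, a U-statistic of order two;
the resulting error of the ratio is largest when the numerator is `B_switch` and the denominator
`b_orig`. For the U-statistic to have `n / 2` effective observations even when `n` is odd, its
moment generating function is bounded by Finner's inequality (Hölder's inequality on a product space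
for a fractional cover of the coordinates) instead of an average over partitions into disjoint
pairs. A union bound over the six events gives the result.
-/

open ProbabilityTheory Finset
open scoped ENNReal NNReal BigOperators

section Finner

variable {ι κ : Type*} {X : ι → Type*} [∀ i, MeasurableSpace (X i)] {μ : ∀ i, Measure (X i)}
  [DecidableEq ι]

lemma lmarginal_update_of_dependsOn [∀ i, SigmaFinite (μ i)] {f : (∀ i, X i) → ℝ≥0∞}
    (hf : Measurable f) {A : Set ι} (hA : DependsOn f A) {T : Finset ι} {k : ι} (hkT : k ∉ T)
    (hkA : k ∉ A) (x : ∀ i, X i) (y : X k) :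
    (∫⋯∫⁻_T, f ∂μ) (Function.update x k y) = (∫⋯∫⁻_T, f ∂μ) x := by
  have hupdate : f ∘ (Function.update · k y) = f := funext fun z =>
    hA fun i hi => Function.update_of_ne (ne_of_mem_of_not_mem hi hkA) _ _
  rw [lmarginal_update_of_notMem hf hkT, hupdate]

theorem lmarginal_prod_rpow_le [∀ i, SigmaFinite (μ i)] {S : Finset κ}
    {f : κ → (∀ i, X i) → ℝ≥0∞} (hf : ∀ s ∈ S, Measurable (f s)) {A : κ → Finset ι}
    (hA : ∀ s ∈ S, DependsOn (f s) (A s)) {p : κ → ℝ} (hp : ∀ s ∈ S, 0 ≤ p s) {T : Finset ι}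
    (hcover : ∀ k ∈ T, ∑ s ∈ S with k ∈ A s, p s = 1) (x : ∀ i, X i) :
    (∫⋯∫⁻_T, (fun ω => ∏ s ∈ S, f s ω ^ p s) ∂μ) x
      ≤ ∏ s ∈ S, (∫⋯∫⁻_T ∩ A s, f s ∂μ) x ^ p s := by
  induction T using Finset.induction generalizing x with
  | empty => simp
  | insert k T hk ih =>
    have hinner : ∀ s ∈ S, Measurable fun y =>
        (∫⋯∫⁻_T ∩ A s, f s ∂μ) (Function.update x k y) := fun s hs =>
      (hf s hs).lmarginal μ |>.comp (measurable_update x)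
    have hkTA : ∀ s, k ∉ T ∩ A s := fun s h => hk (mem_of_mem_inter_left h)
    calc (∫⋯∫⁻_insert k T, (fun ω => ∏ s ∈ S, f s ω ^ p s) ∂μ) x
        ≤ ∫⁻ y, ∏ s ∈ S, (∫⋯∫⁻_T ∩ A s, f s ∂μ) (Function.update x k y) ^ p s ∂μ k := by
          rw [lmarginal_insert _ (S.measurable_fun_prod fun s hs => (hf s hs).pow_const _) hk]
          exact lintegral_mono fun y => ih (fun j hj => hcover j (mem_insert_of_mem hj)) _
      _ = ∫⁻ y, (∏ s ∈ S with k ∉ A s, (∫⋯∫⁻_T ∩ A s, f s ∂μ) x ^ p s) *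
            ∏ s ∈ S with k ∈ A s, (∫⋯∫⁻_T ∩ A s, f s ∂μ) (Function.update x k y) ^ p s ∂μ k := by
          refine lintegral_congr fun y => ?_
          rw [← prod_filter_mul_prod_filter_not S (fun s => k ∈ A s), mul_comm]
          congr 1
          refine prod_congr rfl fun s hs => ?_
          obtain ⟨hsS, hks⟩ := mem_filter.1 hs
          rw [lmarginal_update_of_dependsOn (hf s hsS) (hA s hsS) (hkTA s) (mod_cast hks)]
      _ = (∏ s ∈ S with k ∉ A s, (∫⋯∫⁻_T ∩ A s, f s ∂μ) x ^ p s) *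
            ∫⁻ y, ∏ s ∈ S with k ∈ A s,
              (∫⋯∫⁻_T ∩ A s, f s ∂μ) (Function.update x k y) ^ p s ∂μ k :=
          lintegral_const_mul _ <| Finset.measurable_fun_prod _ fun s hs =>
            (hinner s (mem_filter.1 hs).1).pow_const _
      _ ≤ (∏ s ∈ S with k ∉ A s, (∫⋯∫⁻_T ∩ A s, f s ∂μ) x ^ p s) *
            ∏ s ∈ S with k ∈ A s,
              (∫⁻ y, (∫⋯∫⁻_T ∩ A s, f s ∂μ) (Function.update x k y) ∂μ k) ^ p s := by
          gcongr
          exact ENNReal.lintegral_prod_norm_pow_le _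
            (fun s hs => (hinner s (mem_filter.1 hs).1).aemeasurable)
            (hcover k (mem_insert_self k T)) (fun s hs => hp s (mem_filter.1 hs).1)
      _ = ∏ s ∈ S, (∫⋯∫⁻_insert k T ∩ A s, f s ∂μ) x ^ p s := by
          rw [← prod_filter_mul_prod_filter_not S (fun s => k ∈ A s), mul_comm]
          congr 1 <;> refine prod_congr rfl fun s hs => ?_
          · obtain ⟨hsS, hks⟩ := mem_filter.1 hs
            rw [insert_inter_of_mem hks, lmarginal_insert _ (hf s hsS) (hkTA s)]
          · rw [insert_inter_of_notMem (mem_filter.1 hs).2]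

variable [Fintype ι] [∀ i, IsProbabilityMeasure (μ i)]

lemma lmarginal_eq_lintegral_of_dependsOn {f : (∀ i, X i) → ℝ≥0∞} (hf : Measurable f)
    {A : Finset ι} (hA : DependsOn f A) (x : ∀ i, X i) :
    (∫⋯∫⁻_A, f ∂μ) x = ∫⁻ ω, f ω ∂Measure.pi μ := by
  have hrestrict : ∀ ω, f (Function.updateFinset x A (A.restrict ω)) = f ω := fun ω =>
    hA fun i hi => by simp [Function.updateFinset, mem_coe.1 hi]
  calc (∫⋯∫⁻_A, f ∂μ) x
      = ∫⁻ y, f (Function.updateFinset x A y) ∂(Measure.pi μ).map A.restrict := by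
        rw [← Measure.infinitePi_eq_pi, Measure.infinitePi_map_restrict]; rfl
    _ = ∫⁻ ω, f ω ∂Measure.pi μ := by
        rw [lintegral_map (f := fun y => f (Function.updateFinset x A y))
          (hf.comp measurable_updateFinset) (by fun_prop)]
        exact lintegral_congr hrestrict

theorem lintegral_prod_rpow_le_of_dependsOn {S : Finset κ}
    {f : κ → (∀ i, X i) → ℝ≥0∞} (hf : ∀ s ∈ S, Measurable (f s)) {A : κ → Finset ι}
    (hA : ∀ s ∈ S, DependsOn (f s) (A s)) {p : κ → ℝ} (hp : ∀ s ∈ S, 0 ≤ p s)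
    (hcover : ∀ k, ∑ s ∈ S with k ∈ A s, p s = 1) :
    ∫⁻ ω, ∏ s ∈ S, f s ω ^ p s ∂Measure.pi μ
      ≤ ∏ s ∈ S, (∫⁻ ω, f s ω ∂Measure.pi μ) ^ p s := by
  obtain ⟨x⟩ : Nonempty (∀ i, X i) := (Measure.pi μ).nonempty_of_neZero
  calc ∫⁻ ω, ∏ s ∈ S, f s ω ^ p s ∂Measure.pi μ
      = (∫⋯∫⁻_univ, (fun ω => ∏ s ∈ S, f s ω ^ p s) ∂μ) x := lintegral_eq_lmarginal_univ x
    _ ≤ ∏ s ∈ S, (∫⋯∫⁻_univ ∩ A s, f s ∂μ) x ^ p s :=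
        lmarginal_prod_rpow_le hf hA hp (fun k _ => hcover k) x
    _ = ∏ s ∈ S, (∫⁻ ω, f s ω ∂Measure.pi μ) ^ p s := prod_congr rfl fun s hs => by
        rw [univ_inter, lmarginal_eq_lintegral_of_dependsOn (hf s hs) (hA s hs)]

end Finner

section Subgaussian

variable {Ω : Type*} [MeasurableSpace Ω] {P : Measure Ω} {Y : Ω → ℝ} {c : ℝ≥0}

lemma lintegral_exp_le_of_hasSubgaussianMGF (hY : HasSubgaussianMGF Y c P) (t : ℝ) :
    ∫⁻ ω, ENNReal.ofReal (Real.exp (t * Y ω)) ∂P ≤ ENNReal.ofReal (Real.exp (c * t ^ 2 / 2)) := by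
  rw [← ofReal_integral_eq_lintegral_ofReal (hY.integrable_exp_mul t)
    (ae_of_all _ fun _ => (Real.exp_pos _).le)]
  exact ENNReal.ofReal_le_ofReal (hY.mgf_le t)

lemma hasSubgaussianMGF_of_lintegral_exp_le (hY : AEMeasurable Y P)
    (h : ∀ t : ℝ, ∫⁻ ω, ENNReal.ofReal (Real.exp (t * Y ω)) ∂P
      ≤ ENNReal.ofReal (Real.exp (c * t ^ 2 / 2))) :
    HasSubgaussianMGF Y c P := by
  have hint : ∀ t : ℝ, Integrable (fun ω => Real.exp (t * Y ω)) P := fun t =>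
    (lintegral_ofReal_ne_top_iff_integrable (by fun_prop)
      (ae_of_all _ fun _ => (Real.exp_pos _).le)).1 ((h t).trans_lt ENNReal.ofReal_lt_top).ne
  refine ⟨hint, fun t => ?_⟩
  rw [← ENNReal.ofReal_le_ofReal_iff (Real.exp_pos _).le, mgf,
    ofReal_integral_eq_lintegral_ofReal (hint t) (ae_of_all _ fun _ => (Real.exp_pos _).le)]
  exact h t

lemma prod_ofReal_exp_rpow {κ : Type*} (S : Finset κ) (a p : κ → ℝ) :
    ∏ s ∈ S, ENNReal.ofReal (Real.exp (a s)) ^ p s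
      = ENNReal.ofReal (Real.exp (∑ s ∈ S, a s * p s)) := by
  simp_rw [ENNReal.ofReal_rpow_of_pos (Real.exp_pos _), ← Real.exp_mul]
  rw [← ENNReal.ofReal_prod_of_nonneg fun _ _ => (Real.exp_pos _).le, ← Real.exp_sum]

theorem hasSubgaussianMGF_sum_of_dependsOn {ι κ : Type*} [Fintype ι] [DecidableEq ι]
    {X : ι → Type*} [∀ i, MeasurableSpace (X i)] {μ : ∀ i, Measure (X i)}
    [∀ i, IsProbabilityMeasure (μ i)] {S : Finset κ} {Y : κ → (∀ i, X i) → ℝ}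
    (hY : ∀ s ∈ S, Measurable (Y s)) {A : κ → Finset ι} (hA : ∀ s ∈ S, DependsOn (Y s) (A s))
    {c : κ → ℝ≥0} (hc : ∀ s ∈ S, HasSubgaussianMGF (Y s) (c s) (Measure.pi μ))
    {p : κ → ℝ≥0} (hp : ∀ s ∈ S, p s ≠ 0) (hcover : ∀ k, ∑ s ∈ S with k ∈ A s, p s = 1) :
    HasSubgaussianMGF (fun ω => ∑ s ∈ S, Y s ω) (∑ s ∈ S, c s / p s) (Measure.pi μ) := by
  refine hasSubgaussianMGF_of_lintegral_exp_le (by fun_prop) fun t => ?_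
  have hp' : ∀ s ∈ S, (p s : ℝ) ≠ 0 := fun s hs => mod_cast hp s hs
  calc ∫⁻ ω, ENNReal.ofReal (Real.exp (t * ∑ s ∈ S, Y s ω)) ∂Measure.pi μ
      = ∫⁻ ω, ∏ s ∈ S, ENNReal.ofReal (Real.exp (t / p s * Y s ω)) ^ (p s : ℝ)
          ∂Measure.pi μ := by
        simp_rw [prod_ofReal_exp_rpow, mul_sum]
        refine lintegral_congr fun ω => ?_
        congr 2
        refine sum_congr rfl fun s hs => ?_
        field_simp [hp' s hs]
    _ ≤ ∏ s ∈ S, (∫⁻ ω, ENNReal.ofReal (Real.exp (t / p s * Y s ω)) ∂Measure.pi μ)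
          ^ (p s : ℝ) :=
        lintegral_prod_rpow_le_of_dependsOn
          (fun s hs => ((hY s hs).const_mul _).exp.ennreal_ofReal)
          (fun s hs ω ω' h => by simp only [hA s hs h]) (fun s _ => (p s).2)
          (fun k => mod_cast hcover k)
    _ ≤ ∏ s ∈ S, ENNReal.ofReal (Real.exp (c s * (t / p s) ^ 2 / 2)) ^ (p s : ℝ) := by
        gcongr with s hs
        exact lintegral_exp_le_of_hasSubgaussianMGF (hc s hs) _
    _ = ENNReal.ofReal (Real.exp ((∑ s ∈ S, c s / p s : ℝ≥0) * t ^ 2 / 2)) := by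
        rw [prod_ofReal_exp_rpow]
        push_cast
        rw [sum_mul, sum_div]
        congr 2
        refine sum_congr rfl fun s hs => ?_
        field_simp [hp' s hs]

theorem measure_sqrt_log_lt_le_of_hasSubgaussianMGF (hY : HasSubgaussianMGF Y c P) {η : ℝ}
    (hη : 0 < η) : P {ω | √(2 * c * Real.log (1 / η)) < Y ω} ≤ ENNReal.ofReal η := by
  rcases eq_or_ne c 0 with rfl | hc
  · have hzero := hY.ae_eq_zero_of_hasSubgaussianMGF_zero
    have hnull : P {ω | √(2 * (0 : ℝ≥0) * Real.log (1 / η)) < Y ω} = 0 :=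
      measure_eq_zero_iff_ae_notMem.2 <| hzero.mono fun ω hω => by simp [hω]
    exact hnull.le.trans zero_le
  · have : IsFiniteMeasure P := by simpa [integrable_const_iff] using hY.integrable_exp_mul 0
    have hc' : (0 : ℝ) < c := mod_cast pos_iff_ne_zero.2 hc
    calc P {ω | √(2 * c * Real.log (1 / η)) < Y ω}
        ≤ P {ω | √(2 * c * Real.log (1 / η)) ≤ Y ω} :=
          measure_mono (Set.ofPred_subset_ofPred.2 fun _ => le_of_lt)
      _ = ENNReal.ofReal (P.real {ω | √(2 * c * Real.log (1 / η)) ≤ Y ω}) :=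
          by rw [ofReal_measureReal]
      _ ≤ ENNReal.ofReal (Real.exp (-√(2 * c * Real.log (1 / η)) ^ 2 / (2 * c))) :=
          ENNReal.ofReal_le_ofReal (hY.measure_ge_le (Real.sqrt_nonneg _))
      _ ≤ ENNReal.ofReal η := by
          refine ENNReal.ofReal_le_ofReal ((Real.le_log_iff_exp_le hη).1 ?_)
          rw [Real.sq_sqrt', div_le_iff₀ (mul_pos two_pos hc'), one_div, Real.log_inv]
          linarith [le_max_left (2 * c * -Real.log η) 0]

end Subgaussian

section Expect

variable {Ω W κ : Type*} [MeasurableSpace Ω] [MeasurableSpace W] {P : Measure Ω} {Q : Measure W}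
  {S : Finset κ} {T : κ → Ω → W} {h : W → ℝ}

lemma integrable_expect_comp (hT : ∀ s ∈ S, MeasurePreserving (T s) P Q) (hh : Integrable h Q) :
    Integrable (fun ω => 𝔼 s ∈ S, h (T s ω)) P := by
  simp_rw [expect_eq_sum_div_card]
  exact (integrable_finsetSum _ fun s hs => (hT s hs).integrable_comp_of_integrable hh).div_const _

lemma integral_expect_comp (hS : S.Nonempty) (hT : ∀ s ∈ S, MeasurePreserving (T s) P Q)
    (hh : Integrable h Q) : ∫ ω, 𝔼 s ∈ S, h (T s ω) ∂P = ∫ w, h w ∂Q := by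
  have hcomp : ∀ s ∈ S, ∫ ω, h (T s ω) ∂P = ∫ w, h w ∂Q := fun s hs => by
    have hmap := (hT s hs).map_eq
    rw [← hmap, integral_map (hT s hs).aemeasurable (hmap ▸ hh.aestronglyMeasurable)]
  simp_rw [expect_eq_sum_div_card]
  rw [integral_div, integral_finsetSum (f := fun s ω => h (T s ω)) _ fun s hs =>
    (hT s hs).integrable_comp_of_integrable hh, ← expect_eq_sum_div_card, expect_congr rfl hcomp,
    expect_const hS]

lemma hasSubgaussianMGF_expect_of_sum {Y : κ → Ω → ℝ} {c : ℝ≥0}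
    (hY : HasSubgaussianMGF (fun ω => ∑ s ∈ S, Y s ω) c P) :
    HasSubgaussianMGF (fun ω => 𝔼 s ∈ S, Y s ω) (c / #S ^ 2) P := by
  have hparam : c / #S ^ 2 = NNReal.mk ((#S : ℝ)⁻¹ ^ 2) (sq_nonneg _) * c := by
    ext
    push_cast
    ring
  simp_rw [expect_eq_sum_div_card, div_eq_inv_mul _ (#S : ℝ)]
  rw [hparam]
  exact hY.const_mul _

end Expect

section UStatistic

variable {ι Z : Type*} [Fintype ι]

/-- The U-statistic of order two with kernel `h`, which need not be symmetric: the average of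
`h (ω i, ω j)` over the ordered pairs of distinct indices. -/
noncomputable def uStatistic (h : Z × Z → ℝ) (ω : ι → Z) : ℝ :=
  𝔼 s ∈ univ.offDiag, h (ω s.1, ω s.2)

lemma uStatistic_neg (h : Z × Z → ℝ) (ω : ι → Z) : uStatistic (-h) ω = -uStatistic h ω :=
  expect_neg_distrib _ _

lemma uStatistic_eq_sum_erase_div [DecidableEq ι] (h : Z × Z → ℝ) (ω : ι → Z) :
    uStatistic h ω = (∑ i, ∑ j ∈ univ.erase i, h (ω i, ω j)) /
      (Fintype.card ι * (Fintype.card ι - 1)) := by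
  have hcard : (#(univ : Finset ι).offDiag : ℝ) = Fintype.card ι * (Fintype.card ι - 1) := by
    rw [offDiag_card, card_univ, Nat.cast_sub (Nat.le_mul_self _)]
    push_cast
    ring
  rw [uStatistic, expect_eq_sum_div_card, hcard, sum_finset_product _ univ (univ.erase ·)
    (by simp [eq_comm])]

lemma univ_offDiag_nonempty [Nontrivial ι] : (univ : Finset ι).offDiag.Nonempty := by
  obtain ⟨i, j, hij⟩ := exists_pair_ne ι
  exact ⟨(i, j), by simpa using hij⟩

lemma card_filter_mem_pair_offDiag [DecidableEq ι] (k : ι) :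
    #{s ∈ (univ : Finset ι).offDiag | k ∈ ({s.1, s.2} : Finset ι)}
      = 2 * (Fintype.card ι - 1) := by
  have havoid : {s ∈ (univ : Finset ι).offDiag | k ∉ ({s.1, s.2} : Finset ι)}
      = (univ.erase k).offDiag := by
    ext s
    simp only [mem_filter, mem_offDiag, mem_univ, mem_insert, mem_singleton, mem_erase]
    tauto
  have hsplit := card_filter_add_card_filter_not (s := (univ : Finset ι).offDiag)
    (fun s => k ∈ ({s.1, s.2} : Finset ι))
  rw [havoid, offDiag_card, offDiag_card, card_erase_of_mem (mem_univ k), card_univ] at hsplit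
  obtain ⟨m, hm⟩ := Nat.exists_eq_add_one.2 (Fintype.card_pos_iff.2 ⟨k⟩)
  rw [hm] at hsplit ⊢
  have hsq : (m + 1) * (m + 1) = m * m + 2 * m + 1 := by ring
  have hle : m ≤ m * m := Nat.le_mul_self m
  simp only [Nat.add_sub_cancel] at hsplit ⊢
  omega

variable [MeasurableSpace Z] {D : Measure Z} [IsProbabilityMeasure D]

lemma measurePreserving_eval_pair {X : ι → Type*} [∀ i, MeasurableSpace (X i)]
    (μ : ∀ i, Measure (X i)) [∀ i, IsProbabilityMeasure (μ i)] {i j : ι} (hij : i ≠ j) :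
    MeasurePreserving (fun ω : ∀ i, X i => (ω i, ω j)) (Measure.pi μ) ((μ i).prod (μ j)) := by
  refine ⟨by fun_prop, ?_⟩
  have hindep : iIndepFun (fun i (ω : ∀ i, X i) => ω i) (Measure.pi μ) :=
    iIndepFun_pi (X := fun _ z => z) fun _ => aemeasurable_id
  rw [(indepFun_iff_map_prod_eq_prod_map_map (measurable_pi_apply i).aemeasurable
    (measurable_pi_apply j).aemeasurable).1 (hindep.indepFun hij),
    (measurePreserving_eval μ i).map_eq, (measurePreserving_eval μ j).map_eq]

/-- The pairs `{i, j}` with weight `1 / (2 * (n - 1))` each form a fractional cover of the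
coordinates, which gives `n / 2` effective observations for odd `n` too. -/
theorem hasSubgaussianMGF_uStatistic [Nontrivial ι] {h : Z × Z → ℝ} (hm : Measurable h) {c : ℝ≥0}
    (hc : HasSubgaussianMGF h c (D.prod D)) :
    HasSubgaussianMGF (uStatistic h : (ι → Z) → ℝ) (2 * c / Fintype.card ι)
      (Measure.pi fun _ => D) := by
  classical
  have hn : 0 < Fintype.card ι - 1 := Nat.sub_pos_of_lt Fintype.one_lt_card
  have hsum := hasSubgaussianMGF_sum_of_dependsOn (μ := fun _ : ι => D) (S := univ.offDiag)
    (Y := fun s ω => h (ω s.1, ω s.2)) (fun s _ => by fun_prop) (A := fun s => {s.1, s.2})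
    (fun s _ ω ω' hω => by simp [hω s.1 (by simp), hω s.2 (by simp)]) (c := fun _ => c)
    (fun s hs => .of_map (by fun_prop) <| by
      rwa [(measurePreserving_eval_pair (fun _ => D) (mem_offDiag.1 hs).2.2).map_eq])
    (p := fun _ => ((2 * (Fintype.card ι - 1) : ℕ) : ℝ≥0)⁻¹) (fun _ _ => by positivity)
    (fun k => by
      rw [sum_const, card_filter_mem_pair_offDiag, nsmul_eq_mul]
      exact mul_inv_cancel₀ (by positivity))
  convert! hasSubgaussianMGF_expect_of_sum hsum using 1
  rw [sum_const, offDiag_card, card_univ, ← Nat.mul_sub_one, nsmul_eq_mul]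
  simp only [Nat.cast_mul, Nat.cast_ofNat]
  field_simp

theorem hasSubgaussianMGF_expect_eval [Nonempty ι] {h : Z → ℝ} {c : ℝ≥0}
    (hc : HasSubgaussianMGF h c D) :
    HasSubgaussianMGF (fun ω : ι → Z => 𝔼 i, h (ω i)) (c / Fintype.card ι)
      (Measure.pi fun _ => D) := by
  have hsum := HasSubgaussianMGF.sum_of_iIndepFun (s := univ)
    (iIndepFun_pi (μ := fun _ : ι => D) (X := fun _ => h) fun _ => hc.aemeasurable)
    (c := fun _ => c)
    (fun i _ => .of_map (measurable_pi_apply i).aemeasurable <| by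
      rwa [(measurePreserving_eval _ i).map_eq])
  convert! hasSubgaussianMGF_expect_of_sum hsum using 1
  rw [sum_const, card_univ, nsmul_eq_mul]
  field_simp

lemma integral_expect_eval [Nonempty ι] {h : Z → ℝ} (hi : Integrable h D) :
    ∫ ω : ι → Z, 𝔼 i, h (ω i) ∂Measure.pi (fun _ => D) = ∫ z, h z ∂D :=
  integral_expect_comp univ_nonempty (fun i _ => measurePreserving_eval _ i) hi

lemma integral_uStatistic [Nontrivial ι] {h : Z × Z → ℝ} (hi : Integrable h (D.prod D)) :
    ∫ ω : ι → Z, uStatistic h ω ∂Measure.pi (fun _ => D) = ∫ q, h q ∂D.prod D :=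
  integral_expect_comp univ_offDiag_nonempty
    (fun _ hs => measurePreserving_eval_pair _ (mem_offDiag.1 hs).2.2) hi

end UStatistic

section Hoeffding

lemma sub_mul_sqrt_div_eq {a b : ℝ} (hab : a ≤ b) (t m : ℝ) :
    (b - a) * √(t / m) = √(2 * (2 * (‖b - a‖₊ / 2) ^ 2 / m) * t) := by
  have hle : 0 ≤ b - a := sub_nonneg.2 hab
  calc (b - a) * √(t / m) = √((b - a) ^ 2 * (t / m)) := by
        rw [Real.sqrt_mul (sq_nonneg _), Real.sqrt_sq hle]
    _ = _ := by
        rw [coe_nnnorm, Real.norm_of_nonneg hle]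
        ring_nf

variable {ι Z : Type*} [Fintype ι] [MeasurableSpace Z] {D : Measure Z} [IsProbabilityMeasure D]
  {a b η : ℝ}

theorem measure_expect_sub_integral_gt_le [Nonempty ι] {h : Z → ℝ} (hm : Measurable h)
    (hab : ∀ z, h z ∈ Set.Icc a b) (hη : 0 < η) :
    Measure.pi (fun _ : ι => D) {ω | (b - a) * √(Real.log (1 / η) / (2 * Fintype.card ι))
      < 𝔼 i, h (ω i) - ∫ z, h z ∂D} ≤ ENNReal.ofReal η := by
  obtain ⟨z⟩ : Nonempty Z := D.nonempty_of_neZero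
  have htail := measure_sqrt_log_lt_le_of_hasSubgaussianMGF
    (hasSubgaussianMGF_expect_eval (ι := ι) <|
      hasSubgaussianMGF_of_mem_Icc (μ := D) hm.aemeasurable (ae_of_all _ hab)) hη
  have hthreshold : (b - a) * √(Real.log (1 / η) / (2 * Fintype.card ι))
      = √(2 * ↑((‖b - a‖₊ / 2) ^ 2 / Fintype.card ι : ℝ≥0) * Real.log (1 / η)) := by
    rw [sub_mul_sqrt_div_eq ((hab z).1.trans (hab z).2)]
    push_cast
    ring_nf
  rw [hthreshold]
  simpa only [expect_sub_distrib, Fintype.expect_const] using htail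

theorem measure_integral_sub_expect_gt_le [Nonempty ι] {h : Z → ℝ} (hm : Measurable h)
    (hab : ∀ z, h z ∈ Set.Icc a b) (hη : 0 < η) :
    Measure.pi (fun _ : ι => D) {ω | (b - a) * √(Real.log (1 / η) / (2 * Fintype.card ι))
      < ∫ z, h z ∂D - 𝔼 i, h (ω i)} ≤ ENNReal.ofReal η := by
  have hneg := measure_expect_sub_integral_gt_le (ι := ι) (D := D) hm.neg
    (fun z => ⟨neg_le_neg (hab z).2, neg_le_neg (hab z).1⟩) hη
  simpa only [Pi.neg_apply, expect_neg_distrib, integral_neg, neg_sub_neg] using hneg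

theorem measure_uStatistic_sub_integral_gt_le [Nontrivial ι] {h : Z × Z → ℝ} (hm : Measurable h)
    (hab : ∀ q, h q ∈ Set.Icc a b) (hη : 0 < η) :
    Measure.pi (fun _ : ι => D) {ω | (b - a) * √(Real.log (1 / η) / Fintype.card ι)
      < uStatistic h ω - ∫ q, h q ∂D.prod D} ≤ ENNReal.ofReal η := by
  obtain ⟨q⟩ : Nonempty (Z × Z) := (D.prod D).nonempty_of_neZero
  have htail := measure_sqrt_log_lt_le_of_hasSubgaussianMGF
    (hasSubgaussianMGF_uStatistic (ι := ι) (hm.sub_const _) <|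
      hasSubgaussianMGF_of_mem_Icc (μ := D.prod D) hm.aemeasurable (ae_of_all _ hab)) hη
  have hthreshold : (b - a) * √(Real.log (1 / η) / Fintype.card ι)
      = √(2 * ↑(2 * (‖b - a‖₊ / 2) ^ 2 / Fintype.card ι : ℝ≥0) * Real.log (1 / η)) := by
    rw [sub_mul_sqrt_div_eq ((hab q).1.trans (hab q).2)]
    push_cast
    rfl
  rw [hthreshold]
  simpa only [uStatistic, expect_sub_distrib, expect_const univ_offDiag_nonempty] using htail

theorem measure_integral_sub_uStatistic_gt_le [Nontrivial ι] {h : Z × Z → ℝ} (hm : Measurable h)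
    (hab : ∀ q, h q ∈ Set.Icc a b) (hη : 0 < η) :
    Measure.pi (fun _ : ι => D) {ω | (b - a) * √(Real.log (1 / η) / Fintype.card ι)
      < ∫ q, h q ∂D.prod D - uStatistic h ω} ≤ ENNReal.ofReal η := by
  have hneg := measure_uStatistic_sub_integral_gt_le (ι := ι) (D := D) hm.neg
    (fun q => ⟨neg_le_neg (hab q).2, neg_le_neg (hab q).1⟩) hη
  simpa only [uStatistic_neg, Pi.neg_apply, integral_neg, neg_sub_neg] using hneg

theorem measure_expect_gt_add_le_of_integral_le [Nonempty ι] {ℓ ℓ' : Z → ℝ} {B : ℝ}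
    (hℓ : Measurable ℓ) (hℓ' : Measurable ℓ') (hB : ∀ z, |ℓ z - ℓ' z| ≤ B) (hi : Integrable ℓ D)
    (hle : ∫ z, ℓ z ∂D ≤ ∫ z, ℓ' z ∂D) (hη : 0 < η) :
    Measure.pi (fun _ : ι => D) {ω | 𝔼 i, ℓ' (ω i)
        + 2 * B * √(Real.log (1 / η) / (2 * Fintype.card ι)) < 𝔼 i, ℓ (ω i)}
      ≤ ENNReal.ofReal η := by
  have hidiff : Integrable (fun z => ℓ z - ℓ' z) D :=
    .of_bound (hℓ.sub hℓ').aestronglyMeasurable B (ae_of_all _ hB)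
  have hmean : ∫ z, (ℓ z - ℓ' z) ∂D ≤ 0 := by
    have hi' : Integrable ℓ' D := (hi.sub hidiff).congr (ae_of_all _ fun z => sub_sub_cancel _ _)
    rw [integral_sub hi hi']
    exact sub_nonpos.2 hle
  refine (measure_mono <| Set.ofPred_subset_ofPred.2 fun ω hω => ?_).trans
    (measure_expect_sub_integral_gt_le (hℓ.sub hℓ') (fun z => abs_le.1 (hB z)) hη)
  simp only [Pi.sub_apply, expect_sub_distrib]
  linarith

end Hoeffding

section Ratio

lemma div_sub_sub_div_add_eq {s o a b : ℝ} (ho : o ≠ 0) (hob : o + b ≠ 0) :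
    s / o - (s - a) / (o + b) = s * (b / (o * (o + b))) + a / (o + b) := by
  field_simp
  ring

/-- The loss `s / o - (s - a) / (o + b)` is increasing in `s` and decreasing in `o`, so its worst
case is `s = Bs`, `o = bo`. -/
lemma div_le_div_add_of_sub_le_of_le_add {s o s' o' a b Bs bo : ℝ} (ha : 0 ≤ a) (hb : 0 ≤ b)
    (hbo : 0 < bo) (ho : bo ≤ o) (hs : 0 ≤ s) (hsB : s ≤ Bs) (ho' : 0 < o') (hs' : 0 ≤ s')
    (hss' : s - a ≤ s') (hoo' : o' ≤ o + b) :
    s / o ≤ s' / o' + (Bs / bo - (Bs - a) / (bo + b)) := by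
  have ho_pos : 0 < o := hbo.trans_le ho
  have hperturbed : (s - a) / (o + b) ≤ s' / o' := div_le_div₀ hs' hss' ho' hoo'
  have hworst : s / o - (s - a) / (o + b) ≤ Bs / bo - (Bs - a) / (bo + b) := by
    rw [div_sub_sub_div_add_eq ho_pos.ne' (by positivity),
      div_sub_sub_div_add_eq hbo.ne' (by positivity)]
    have : 0 ≤ Bs := hs.trans hsB
    gcongr
  linarith

end Ratio

section RatioMargin

/-- The half-width `Q` of the confidence interval for a ratio of a U-statistic to a sample mean of
`n` observations: the worst-case error of a ratio whose numerator is at most `Bs`, whose denominator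
is at least `bo`, and whose entries in `[0, B]` are estimated at confidence level `1 - η` each. -/
noncomputable def ratioMargin (B bo Bs η n : ℝ) : ℝ :=
  Bs / bo - (Bs - B * √(Real.log (1 / η) / n)) / (bo + B * √(Real.log (1 / η) / (2 * n)))

variable {ι Z : Type*} [Fintype ι] [Nontrivial ι] [MeasurableSpace Z] {D : Measure Z}
  [IsProbabilityMeasure D] {ℓ : Z → ℝ} {k : Z × Z → ℝ} {B bo Bs η : ℝ}

lemma le_integral_of_ae_le_expect (hi : Integrable ℓ D)
    (h : ∀ᵐ ω ∂Measure.pi (fun _ : ι => D), bo ≤ 𝔼 i, ℓ (ω i)) : bo ≤ ∫ z, ℓ z ∂D := by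
  rw [← integral_expect_eval (ι := ι) hi]
  calc bo = ∫ _, bo ∂Measure.pi (fun _ : ι => D) := by simp
    _ ≤ _ := integral_mono_ae (integrable_const _)
      (integrable_expect_comp (fun i _ => measurePreserving_eval _ i) hi) h

lemma integral_le_of_ae_uStatistic_le (hi : Integrable k (D.prod D))
    (h : ∀ᵐ ω ∂Measure.pi (fun _ : ι => D), uStatistic k ω ≤ Bs) :
    ∫ q, k q ∂D.prod D ≤ Bs := by
  rw [← integral_uStatistic (ι := ι) hi]
  calc ∫ ω : ι → Z, uStatistic k ω ∂Measure.pi (fun _ => D)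
      ≤ ∫ _, Bs ∂Measure.pi (fun _ : ι => D) := integral_mono_ae
        (integrable_expect_comp
          (fun _ hs => measurePreserving_eval_pair _ (mem_offDiag.1 hs).2.2) hi)
        (integrable_const _) h
    _ = Bs := by simp

theorem measure_uStatistic_div_expect_add_lt_le (hℓ : Measurable ℓ)
    (hℓB : ∀ z, ℓ z ∈ Set.Icc 0 B) (hk : Measurable k) (hkB : ∀ q, k q ∈ Set.Icc 0 B)
    (hbo : 0 < bo)
    (hbounds : ∀ᵐ ω ∂Measure.pi (fun _ : ι => D), bo ≤ 𝔼 i, ℓ (ω i) ∧ uStatistic k ω ≤ Bs)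
    (hη : 0 < η) :
    Measure.pi (fun _ : ι => D) {ω | uStatistic k ω / 𝔼 i, ℓ (ω i)
        + ratioMargin B bo Bs η (Fintype.card ι) < (∫ q, k q ∂D.prod D) / ∫ z, ℓ z ∂D}
      ≤ ENNReal.ofReal (2 * η) := by
  obtain ⟨z⟩ : Nonempty Z := D.nonempty_of_neZero
  have hB : 0 ≤ B := (hℓB z).1.trans (hℓB z).2
  have hden : bo ≤ ∫ z, ℓ z ∂D := le_integral_of_ae_le_expect
    (.of_mem_Icc 0 B hℓ.aemeasurable (ae_of_all _ hℓB)) (hbounds.mono fun _ h => h.1)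
  have hnum : ∫ q, k q ∂D.prod D ≤ Bs := integral_le_of_ae_uStatistic_le
    (.of_mem_Icc 0 B hk.aemeasurable (ae_of_all _ hkB)) (hbounds.mono fun _ h => h.2)
  rw [two_mul, ENNReal.ofReal_add hη.le hη.le]
  refine le_trans (measure_mono_ae ?_) <| (measure_union_le _ _).trans <| add_le_add
    (measure_integral_sub_uStatistic_gt_le (D := D) hk hkB hη)
    (measure_expect_sub_integral_gt_le (D := D) hℓ hℓB hη)
  filter_upwards [hbounds] with ω ⟨hden', _⟩ hfail
  by_contra hgood
  obtain ⟨hnum_close, hden_close⟩ := not_or.1 hgood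
  simp only [Set.mem_ofPred_eq, sub_zero, not_lt] at hnum_close hden_close
  refine hfail.not_ge (div_le_div_add_of_sub_le_of_le_add (by positivity) (by positivity) hbo hden
    (integral_nonneg fun q => (hkB q).1) hnum (hbo.trans_le hden')
    (expect_nonneg fun s _ => (hkB _).1) ?_ ?_) <;> linarith

theorem measure_integral_div_integral_add_lt_le (hℓ : Measurable ℓ)
    (hℓB : ∀ z, ℓ z ∈ Set.Icc 0 B) (hk : Measurable k) (hkB : ∀ q, k q ∈ Set.Icc 0 B)
    (hbo : 0 < bo)
    (hbounds : ∀ᵐ ω ∂Measure.pi (fun _ : ι => D), bo ≤ 𝔼 i, ℓ (ω i) ∧ uStatistic k ω ≤ Bs)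
    (hη : 0 < η) :
    Measure.pi (fun _ : ι => D) {ω | (∫ q, k q ∂D.prod D) / ∫ z, ℓ z ∂D
        + ratioMargin B bo Bs η (Fintype.card ι) < uStatistic k ω / 𝔼 i, ℓ (ω i)}
      ≤ ENNReal.ofReal (2 * η) := by
  obtain ⟨z⟩ : Nonempty Z := D.nonempty_of_neZero
  have hB : 0 ≤ B := (hℓB z).1.trans (hℓB z).2
  have hden : bo ≤ ∫ z, ℓ z ∂D := le_integral_of_ae_le_expect
    (.of_mem_Icc 0 B hℓ.aemeasurable (ae_of_all _ hℓB)) (hbounds.mono fun _ h => h.1)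
  rw [two_mul, ENNReal.ofReal_add hη.le hη.le]
  refine le_trans (measure_mono_ae ?_) <| (measure_union_le _ _).trans <| add_le_add
    (measure_uStatistic_sub_integral_gt_le (D := D) hk hkB hη)
    (measure_integral_sub_expect_gt_le (D := D) hℓ hℓB hη)
  filter_upwards [hbounds] with ω ⟨hden', hnum'⟩ hfail
  by_contra hgood
  obtain ⟨hnum_close, hden_close⟩ := not_or.1 hgood
  simp only [Set.mem_ofPred_eq, sub_zero, not_lt] at hnum_close hden_close
  refine hfail.not_ge (div_le_div_add_of_sub_le_of_le_add (by positivity) (by positivity) hbo hden'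
    (expect_nonneg fun s _ => (hkB _).1) hnum' (hbo.trans_le hden)
    (integral_nonneg fun q => (hkB q).1) ?_ ?_) <;> linarith

end RatioMargin

section ModelReliance

lemma ofReal_one_sub_le_measure_of_measure_compl_le {Ω : Type*} [MeasurableSpace Ω] {P : Measure Ω}
    [IsProbabilityMeasure P] {s : Set Ω} {δ : ℝ} (hδ : 0 ≤ δ) (hs : P sᶜ ≤ ENNReal.ofReal δ) :
    ENNReal.ofReal (1 - δ) ≤ P s := by
  rw [ENNReal.ofReal_sub _ hδ, ENNReal.ofReal_one, tsub_le_iff_right]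
  calc 1 = P (s ∪ sᶜ) := by rw [Set.union_compl_self, measure_univ]
    _ ≤ P s + P sᶜ := measure_union_le _ _
    _ ≤ P s + ENNReal.ofReal δ := by gcongr

variable {ι M 𝒴 𝒳1 𝒳2 : Type*} [Fintype ι]

/-- The loss `L(f, (y⁽ᵇ⁾, x₁⁽ᵃ⁾, x₂⁽ᵇ⁾))` at a pair `(z⁽ᵃ⁾, z⁽ᵇ⁾)` of observations, where
`ℓ = L(f, ·)` is the loss of the model `f`. -/
def switchedLoss (ℓ : 𝒴 × 𝒳1 × 𝒳2 → ℝ) (q : (𝒴 × 𝒳1 × 𝒳2) × (𝒴 × 𝒳1 × 𝒳2)) : ℝ :=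
  ℓ (q.2.1, q.1.2.1, q.2.2.2)

/-- The empirical model reliance `ê_switch / ê_orig` on the sample `ω` of a model with loss `ℓ`. -/
noncomputable def empiricalModelReliance (ℓ : 𝒴 × 𝒳1 × 𝒳2 → ℝ) (ω : ι → 𝒴 × 𝒳1 × 𝒳2) : ℝ :=
  uStatistic (switchedLoss ℓ) ω / 𝔼 i, ℓ (ω i)

/-- The Rashomon set of tolerance `ε`, for the population risk as well as for an empirical risk:
the models in `F` with risk within `ε` of the reference model, together with that model. -/
def rashomonSet (F : Set M) (fref : M) (risk : M → ℝ) (ε : ℝ) : Set M :=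
  insert fref {f ∈ F | risk f ≤ risk fref + ε}

lemma rashomonSet_subset {F : Set M} {fref : M} (hfref : fref ∈ F) (risk : M → ℝ) (ε : ℝ) :
    rashomonSet F fref risk ε ⊆ F :=
  Set.insert_subset hfref (Set.sep_subset _ _)

variable [MeasurableSpace 𝒴] [MeasurableSpace 𝒳1] [MeasurableSpace 𝒳2]

/-- The model reliance `e_switch / e_orig` of a model with loss `ℓ`. -/
noncomputable def modelReliance (D : Measure (𝒴 × 𝒳1 × 𝒳2)) (ℓ : 𝒴 × 𝒳1 × 𝒳2 → ℝ) : ℝ :=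
  (∫ q, switchedLoss ℓ q ∂D.prod D) / ∫ z, ℓ z ∂D

/-- A measurable loss `ℓ` satisfying Assumptions 1, 2 and 3 for samples indexed by `ι`, with `ℓref`
the loss of the reference model. -/
structure IsBoundedLoss (ι : Type*) [Fintype ι] (D : Measure (𝒴 × 𝒳1 × 𝒳2))
    (ℓref : 𝒴 × 𝒳1 × 𝒳2 → ℝ) (Bind Bref borig Bswitch : ℝ) (ℓ : 𝒴 × 𝒳1 × 𝒳2 → ℝ) : Prop where
  measurable : Measurable ℓ
  mem_Icc : ∀ z, ℓ z ∈ Set.Icc 0 Bind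
  abs_sub_le : ∀ z, |ℓ z - ℓref z| ≤ Bref
  ae_bounds : ∀ᵐ ω ∂Measure.pi (fun _ : ι => D),
    borig ≤ 𝔼 i, ℓ (ω i) ∧ uStatistic (switchedLoss ℓ) ω ≤ Bswitch

variable {D : Measure (𝒴 × 𝒳1 × 𝒳2)} [IsProbabilityMeasure D] {F : Set M} {fref f : M}
  {L : M → 𝒴 × 𝒳1 × 𝒳2 → ℝ} {Bind Bref borig Bswitch ε η η' : ℝ}

lemma measurable_switchedLoss {ℓ : 𝒴 × 𝒳1 × 𝒳2 → ℝ} (hℓ : Measurable ℓ) :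
    Measurable (switchedLoss ℓ) :=
  hℓ.comp (by fun_prop)

theorem measure_notMem_rashomonSet_le [Nonempty ι] (href : Measurable (L fref))
    (hf : IsBoundedLoss ι D (L fref) Bind Bref borig Bswitch (L f))
    (hmem : f ∈ rashomonSet F fref (fun f => ∫ z, L f z ∂D) 0) (hη : 0 < η) :
    Measure.pi (fun _ : ι => D) {ω | f ∉ rashomonSet F fref (fun f => 𝔼 i, L f (ω i))
      (2 * Bref * √(Real.log (1 / η) / (2 * Fintype.card ι)))} ≤ ENNReal.ofReal η := by
  rcases hmem with rfl | ⟨hF, hrisk⟩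
  · simp [rashomonSet]
  · refine (measure_mono <| Set.ofPred_subset_ofPred.2 fun ω hω => ?_).trans
      (measure_expect_gt_add_le_of_integral_le hf.measurable href hf.abs_sub_le
        (.of_mem_Icc 0 Bind hf.measurable.aemeasurable (ae_of_all _ hf.mem_Icc))
        (by simpa using hrisk) hη)
    by_contra! hle
    exact hω (Or.inr ⟨hF, hle⟩)

variable [Nontrivial ι]

theorem measure_upper_add_margin_lt_modelReliance_le (href : Measurable (L fref))
    (hf : IsBoundedLoss ι D (L fref) Bind Bref borig Bswitch (L f)) (hborig : 0 < borig)
    (hmem : f ∈ rashomonSet F fref (fun f => ∫ z, L f z ∂D) 0) (hη : 0 < η) (hη' : 0 < η')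
    {u : (ι → 𝒴 × 𝒳1 × 𝒳2) → ℝ}
    (hu : ∀ ω, u ω ∈ upperBounds ((fun f => empiricalModelReliance (L f) ω) ''
      rashomonSet F fref (fun f => 𝔼 i, L f (ω i))
        (2 * Bref * √(Real.log (1 / η) / (2 * Fintype.card ι))))) :
    Measure.pi (fun _ : ι => D) {ω | u ω + ratioMargin Bind borig Bswitch η' (Fintype.card ι)
      < modelReliance D (L f)} ≤ ENNReal.ofReal (η + 2 * η') := by
  rw [ENNReal.ofReal_add hη.le (by positivity)]
  refine (measure_mono fun ω hω => or_iff_not_imp_left.2 fun hR => ?_).trans <|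
    (measure_union_le _ _).trans <| add_le_add
      (measure_notMem_rashomonSet_le href hf hmem hη)
      (measure_uStatistic_div_expect_add_lt_le hf.measurable hf.mem_Icc
        (measurable_switchedLoss hf.measurable) (fun _ => hf.mem_Icc _) hborig hf.ae_bounds hη')
  exact (add_le_add_left (hu ω ⟨f, not_not.1 hR, rfl⟩) _).trans_lt hω

theorem measure_modelReliance_lt_lower_sub_margin_le (href : Measurable (L fref))
    (hf : IsBoundedLoss ι D (L fref) Bind Bref borig Bswitch (L f)) (hborig : 0 < borig)
    (hmem : f ∈ rashomonSet F fref (fun f => ∫ z, L f z ∂D) 0) (hη : 0 < η) (hη' : 0 < η')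
    {l : (ι → 𝒴 × 𝒳1 × 𝒳2) → ℝ}
    (hl : ∀ ω, l ω ∈ lowerBounds ((fun f => empiricalModelReliance (L f) ω) ''
      rashomonSet F fref (fun f => 𝔼 i, L f (ω i))
        (2 * Bref * √(Real.log (1 / η) / (2 * Fintype.card ι))))) :
    Measure.pi (fun _ : ι => D) {ω | modelReliance D (L f)
      < l ω - ratioMargin Bind borig Bswitch η' (Fintype.card ι)} ≤
        ENNReal.ofReal (η + 2 * η') := by
  rw [ENNReal.ofReal_add hη.le (by positivity)]
  refine (measure_mono fun ω hω => or_iff_not_imp_left.2 fun hR => ?_).trans <|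
    (measure_union_le _ _).trans <| add_le_add
      (measure_notMem_rashomonSet_le href hf hmem hη)
      (measure_integral_div_integral_add_lt_le hf.measurable hf.mem_Icc
        (measurable_switchedLoss hf.measurable) (fun _ => hf.mem_Icc _) hborig hf.ae_bounds hη')
  exact (lt_sub_iff_add_lt.1 hω).trans_le (hl ω ⟨f, not_not.1 hR, rfl⟩)

theorem stmt_4_general (href : Measurable (L fref)) (hborig : 0 < borig) {δ : ℝ} (hδ : 0 < δ)
    {fplus fminus : M}
    (hplus : IsBoundedLoss ι D (L fref) Bind Bref borig Bswitch (L fplus))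
    (hminus : IsBoundedLoss ι D (L fref) Bind Bref borig Bswitch (L fminus))
    (hRplus : fplus ∈ rashomonSet F fref (fun f => ∫ z, L f z ∂D) 0)
    (hRminus : fminus ∈ rashomonSet F fref (fun f => ∫ z, L f z ∂D) 0) {ε Q : ℝ}
    (hε : ε = 2 * Bref * √(Real.log (6 / δ) / (2 * Fintype.card ι)))
    (hQ : Q = Bswitch / borig - (Bswitch - Bind * √(Real.log (12 / δ) / Fintype.card ι)) /
      (borig + Bind * √(Real.log (12 / δ) / (2 * Fintype.card ι))))
    {u l : (ι → 𝒴 × 𝒳1 × 𝒳2) → ℝ}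
    (hu : ∀ ω, u ω ∈ upperBounds ((fun f => empiricalModelReliance (L f) ω) ''
      rashomonSet F fref (fun f => 𝔼 i, L f (ω i)) ε))
    (hl : ∀ ω, l ω ∈ lowerBounds ((fun f => empiricalModelReliance (L f) ω) ''
      rashomonSet F fref (fun f => 𝔼 i, L f (ω i)) ε)) :
    ENNReal.ofReal (1 - δ) ≤ Measure.pi (fun _ : ι => D)
      {ω | Set.Icc (modelReliance D (L fminus)) (modelReliance D (L fplus)) ⊆
        Set.Icc (l ω - Q) (u ω + Q)} := by
  have hη : 0 < δ / 6 := by positivity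
  have hη' : 0 < δ / 12 := by positivity
  have hbudget : (δ / 6 + 2 * (δ / 12)) + (δ / 6 + 2 * (δ / 12)) ≤ δ := by linarith
  obtain rfl : Q = ratioMargin Bind borig Bswitch (δ / 12) (Fintype.card ι) := by
    rw [hQ, ratioMargin, one_div_div]
  rw [← one_div_div δ 6] at hε
  subst hε
  refine ofReal_one_sub_le_measure_of_measure_compl_le hδ.le ?_
  refine le_trans ?_ (ENNReal.ofReal_le_ofReal hbudget)
  rw [ENNReal.ofReal_add (by positivity) (by positivity)]
  refine (measure_mono fun ω hω => ?_).trans <| (measure_union_le _ _).trans <| add_le_add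
    (measure_modelReliance_lt_lower_sub_margin_le href hminus hborig hRminus hη hη' hl)
    (measure_upper_add_margin_lt_modelReliance_le href hplus hborig hRplus hη hη' hu)
  by_contra hgood
  obtain ⟨hlower, hupper⟩ := not_or.1 hgood
  exact hω (Set.Icc_subset_Icc (not_lt.1 hlower) (not_lt.1 hupper))

end ModelReliance

/-- Corollary 4 (bound on the model reliance of a best-in-class model): with
probability at least `1 − δ`,
`MR(f*) ∈ [MCR̂₋(ε₂) − Q₂, MCR̂₊(ε₂) + Q₂]`, where
`ε₂ = 2B_ref√(log(6/δ)/(2n))` and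
`Q₂ = B_switch/b_orig − (B_switch − B_ind√(log(12/δ)/n))/(b_orig + B_ind√(log(12/δ)/(2n)))`. -/
theorem stmt_4 {𝒴 𝒳1 𝒳2 : Type*}
    [MeasurableSpace 𝒴] [MeasurableSpace 𝒳1] [MeasurableSpace 𝒳2]
    (D : Measure (𝒴 × 𝒳1 × 𝒳2)) [IsProbabilityMeasure D]
    (F : Set ((𝒳1 × 𝒳2) → 𝒴))
    (L : ((𝒳1 × 𝒳2) → 𝒴) → (𝒴 × 𝒳1 × 𝒳2) → ℝ)
    (hL : ∀ f z, 0 ≤ L f z)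
    (hLmeas : ∀ f ∈ F, Measurable (L f))
    (fref : (𝒳1 × 𝒳2) → 𝒴) (hfref : fref ∈ F)
    (n : ℕ) (hn : 2 ≤ n)
    (Bind Bref borig Bswitch : ℝ) (hborig : 0 < borig)
    (δ : ℝ) (hδ : δ ∈ Set.Ioo (0 : ℝ) 1)
    -- population quantities
    (eorig eswitch : ((𝒳1 × 𝒳2) → 𝒴) → ℝ)
    (heorig : ∀ f, eorig f = ∫ z, L f z ∂D)
    (heswitch : ∀ f, eswitch f = ∫ q, L f (q.2.1, q.1.2.1, q.2.2.2) ∂(D.prod D))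
    (MR : ((𝒳1 × 𝒳2) → 𝒴) → ℝ) (hMR : ∀ f, MR f = eswitch f / eorig f)
    (R : ℝ → Set ((𝒳1 × 𝒳2) → 𝒴))
    (hR : ∀ e, R e = insert fref {f ∈ F | eorig f ≤ eorig fref + e})
    -- empirical quantities, over the i.i.d. sample measure `P = Dⁿ`
    (P : Measure (Fin n → 𝒴 × 𝒳1 × 𝒳2)) (hP : P = Measure.pi fun _ => D)
    (ehatorig ehatswitch : ((𝒳1 × 𝒳2) → 𝒴) → (Fin n → 𝒴 × 𝒳1 × 𝒳2) → ℝ)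
    (hehatorig : ∀ f ω, ehatorig f ω = (∑ i, L f (ω i)) / n)
    (hehatswitch : ∀ f ω, ehatswitch f ω =
      (∑ i, ∑ j ∈ Finset.univ.erase i, L f ((ω j).1, (ω i).2.1, (ω j).2.2)) /
        ((n : ℝ) * ((n : ℝ) - 1)))
    (MRhat : ((𝒳1 × 𝒳2) → 𝒴) → (Fin n → 𝒴 × 𝒳1 × 𝒳2) → ℝ)
    (hMRhat : ∀ f ω, MRhat f ω = ehatswitch f ω / ehatorig f ω)
    (Rhat : ℝ → (Fin n → 𝒴 × 𝒳1 × 𝒳2) → Set ((𝒳1 × 𝒳2) → 𝒴))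
    (hRhat : ∀ e ω, Rhat e ω =
      insert fref {f ∈ F | ehatorig f ω ≤ ehatorig fref ω + e})
    -- `f*` attains the lowest possible expected loss over `ℱ`
    (fstar : (𝒳1 × 𝒳2) → 𝒴) (hfstarF : fstar ∈ F)
    (hfstar : ∀ f ∈ F, eorig fstar ≤ eorig f)
    -- `f₊` and `f₋` attain the highest and lowest model reliance on `R(0)`
    (fplus fminus : (𝒳1 × 𝒳2) → 𝒴)
    (hfplus : fplus ∈ R 0 ∧ ∀ f ∈ R 0, MR f ≤ MR fplus)
    (hfminus : fminus ∈ R 0 ∧ ∀ f ∈ R 0, MR fminus ≤ MR f)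
    -- the empirical MCR values `MCR̂₊(e)`, `MCR̂₋(e)`, assumed to be attained
    (MCRhatP MCRhatM : ℝ → (Fin n → 𝒴 × 𝒳1 × 𝒳2) → ℝ)
    (hMCRhatP : ∀ e ω, IsGreatest ((fun f => MRhat f ω) '' Rhat e ω) (MCRhatP e ω))
    (hMCRhatM : ∀ e ω, IsLeast ((fun f => MRhat f ω) '' Rhat e ω) (MCRhatM e ω))
    -- Assumptions 1, 2, 3 for `f₊` and `f₋`
    (hA1p : ∀ z, L fplus z ≤ Bind) (hA1m : ∀ z, L fminus z ≤ Bind)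
    (hA2p : ∀ z, |L fplus z - L fref z| ≤ Bref)
    (hA2m : ∀ z, |L fminus z - L fref z| ≤ Bref)
    (hA3p : ∀ᵐ ω ∂P, borig ≤ ehatorig fplus ω ∧ ehatswitch fplus ω ≤ Bswitch)
    (hA3m : ∀ᵐ ω ∂P, borig ≤ ehatorig fminus ω ∧ ehatswitch fminus ω ≤ Bswitch)
    -- `ε₂` and `Q₂`
    (ε₂ Q₂ : ℝ)
    (hε₂ : ε₂ = 2 * Bref * Real.sqrt (Real.log (6 / δ) / (2 * n)))
    (hQ₂ : Q₂ = Bswitch / borig -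
      (Bswitch - Bind * Real.sqrt (Real.log (12 / δ) / n)) /
        (borig + Bind * Real.sqrt (Real.log (12 / δ) / (2 * n)))) :
    ENNReal.ofReal (1 - δ) ≤
      P {ω | MR fstar ∈ Set.Icc (MCRhatM ε₂ ω - Q₂) (MCRhatP ε₂ ω + Q₂)} := by
  subst hP
  have : Nontrivial (Fin n) := Fin.nontrivial_iff_two_le.2 hn
  obtain rfl : ehatorig = fun f ω => 𝔼 i, L f (ω i) := funext₂ fun f ω => by
    rw [hehatorig, Fintype.expect_eq_sum_div_card, Fintype.card_fin]
  obtain rfl : ehatswitch = fun f => uStatistic (switchedLoss (L f)) := funext₂ fun f ω => by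
    simp only [hehatswitch, uStatistic_eq_sum_erase_div, Fintype.card_fin, switchedLoss]
  obtain rfl : MRhat = fun f => empiricalModelReliance (L f) := funext₂ hMRhat
  obtain rfl : eorig = fun f => ∫ z, L f z ∂D := funext heorig
  obtain rfl : eswitch = fun f => ∫ q, switchedLoss (L f) q ∂D.prod D := funext heswitch
  obtain rfl : MR = fun f => modelReliance D (L f) := funext hMR
  obtain rfl : R = rashomonSet F fref fun f => ∫ z, L f z ∂D := funext hR
  obtain rfl : Rhat = fun ε ω => rashomonSet F fref (fun f => 𝔼 i, L f (ω i)) ε := funext₂ hRhat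
  have hmeas {f} (hf : f ∈ rashomonSet F fref (fun f => ∫ z, L f z ∂D) 0) : Measurable (L f) :=
    hLmeas f (rashomonSet_subset hfref _ _ hf)
  have hstar : fstar ∈ rashomonSet F fref (fun f => ∫ z, L f z ∂D) 0 :=
    Or.inr ⟨hfstarF, by simpa using hfstar fref hfref⟩
  exact (stmt_4_general (hLmeas fref hfref) hborig hδ.1
    ⟨hmeas hfplus.1, fun z => ⟨hL _ z, hA1p z⟩, hA2p, hA3p⟩
    ⟨hmeas hfminus.1, fun z => ⟨hL _ z, hA1m z⟩, hA2m, hA3m⟩ hfplus.1 hfminus.1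
    (by rwa [Fintype.card_fin]) (by rwa [Fintype.card_fin])
    (fun ω => (hMCRhatP _ ω).2) (fun ω => (hMCRhatM _ ω).2)).trans <|
    measure_mono fun ω hω => hω ⟨hfminus.2 fstar hstar, hfplus.2 fstar hstar⟩
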